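/- For any two distinct computable real numbers a, b ∈ (0,1], the sets S_a = {T ∈ (0,1) | Z(aT) is computable} and S_b = {T ∈ (0,1) | Z(bT) is computable} are disjoint. -/

import Mathlib

open Filter

/-- A real number `α` is computable if some total recursive `f : ℕ+ → ℚ`
satisfies `|α - f n| < 1/n` for all `n`. -/
def ComputableReal (α : ℝ) : Prop :=
  ∃ f : ℕ+ → ℚ, Computable f ∧ ∀ n : ℕ+, |α - (f n : ℝ)| < 1 / (n : ℝ)

/-- A partial function on binary strings has prefix-free domain. -/
def PrefixFree (C : List Bool →. List Bool) : Prop :=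
  ∀ p q : List Bool, (C p).Dom → (C q).Dom → p <+: q → p = q

/-- `U` is an optimal prefix-free machine (universal self-delimiting Turing machine). -/
def OptimalMachine (U : List Bool →. List Bool) : Prop :=
  Partrec U ∧ PrefixFree U ∧
    ∀ C : List Bool →. List Bool, Partrec C → PrefixFree C →
      ∃ d : ℕ, ∀ p s, s ∈ C p → ∃ p', s ∈ U p' ∧ p'.length ≤ p.length + d

/-- Program-size (prefix-free Kolmogorov) complexity of `s` with respect to `U`. -/
noncomputable def complexity (U : List Bool →. List Bool) (s : List Bool) : ℕ :=
  sInf {n | ∃ p : List Bool, p.length = n ∧ s ∈ U p}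

/-- The `i`-th bit (0-indexed) of the base-two expansion of the fractional part
of `α`, in the expansion with infinitely many zeros. -/
noncomputable def bitOf (α : ℝ) (i : ℕ) : Bool := decide (⌊Int.fract α * 2 ^ (i + 1)⌋ % 2 = 1)

/-- The first `n` bits of the base-two expansion of `α - ⌊α⌋`
(with infinitely many zeros). -/
noncomputable def firstBits (α : ℝ) (n : ℕ) : List Bool := (List.range n).map (bitOf α)

/-- `α` is weakly Chaitin `T`-random: `∃ c, ∀ n, T·n − c ≤ H(α_n)`. -/
def WeaklyChaitinTRandom (U : List Bool →. List Bool) (T α : ℝ) : Prop :=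
  ∃ c : ℕ, ∀ n : ℕ+, T * (n : ℝ) - (c : ℝ) ≤ (complexity U (firstBits α n) : ℝ)

/-- `α` is `T`-compressible: `limsup H(α_n)/n ≤ T`. -/
def TCompressible (U : List Bool →. List Bool) (T α : ℝ) : Prop :=
  Filter.limsup (fun n : ℕ => (complexity U (firstBits α n) : ℝ) / (n : ℝ)) atTop ≤ T

/-- The partition function `Z(T) = ∑_{p ∈ dom U} 2^{-|p|/T}`. -/
noncomputable def Zfun (U : List Bool →. List Bool) (T : ℝ) : ℝ :=
  ∑' p : {p : List Bool // (U p).Dom}, (2 : ℝ) ^ (-((p : List Bool).length : ℝ) / T)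

/-- The free energy `F(T) = -T log₂ Z(T)`. -/
noncomputable def Ffun (U : List Bool →. List Bool) (T : ℝ) : ℝ :=
  -T * Real.logb 2 (Zfun U T)

/-! Write `Z(T) = f(2 ^ (-1/T))` with `f(t) = ∑ t ^ |p|`, the sum over the programs `p` of `U`. Let
`a < b` and put `x = 2 ^ (-1/(aT))` and `ρ = a / b`, so that `x < x ^ ρ = 2 ^ (-1/(bT)) < 1/2`.

The first `n = M j` bits of `f(1/2)` yield a finite set `F` of programs whose complement
contributes at most `2 ^ (-n)` to `f(1/2)`. So every program outside `F` has length at least `n`,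
and the complement contributes only `O(x ^ n)` to `f(x)`. Hence `Z(aT) = f(x)` determines `x`, and
with it `x ^ ρ`, up to `O(x ^ n)`. Comparing with `Z(bT) = f(x ^ ρ)` then shows that `F` misses only
`O(x ^ n)` of `f(x ^ ρ)`. As `x < x ^ ρ`, the programs outside `F` are longer than `n` by a factor
greater than `1`, hence longer than `(M + 1) j + O(1)` once `M` and `j` are large. A string that is
not an output of `F` therefore has complexity greater than `(M + 1) j + O(1)`. But the `n` bits,
preceded by `1^j 0` to make them self-delimiting, describe such a string in `(M + 1) j + 1` bits. -/

section Recursion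

open Encodable Nat.Partrec

/-- A computable family of finite approximations to a partial function: `g k a` is the output of
`f` on `a` as far as it is known at stage `k`. At stage `k` only the inputs with code below `k`
are considered, so that each stage is finite. -/
structure IsStageApproximation {α σ : Type*} [Primcodable α] [Primcodable σ] (f : α →. σ)
    (g : ℕ → α → Option σ) : Prop where
  computable : Computable₂ g
  encode_lt : ∀ {k a b}, b ∈ g k a → encode a < k
  mono : ∀ {k l a b}, k ≤ l → b ∈ g k a → b ∈ g l a
  mem_iff : ∀ {a b}, b ∈ f a ↔ ∃ k, b ∈ g k a

variable {α β : Type*} [Primcodable α] [Primcodable β]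

theorem exists_isStageApproximation {f : α →. β} (hf : Partrec f) :
    ∃ g, IsStageApproximation f g := by
  obtain ⟨c, hc⟩ := Code.exists_code.1 hf
  refine ⟨fun k a => (c.evaln k (encode a)).bind decode, ?_, ?_, ?_, ?_⟩
  · exact Computable.option_bind (Code.primrec_evaln.to_comp.comp
      ((Computable.fst.pair (Computable.const c)).pair (Computable.encode.comp Computable.snd)))
      (Computable.decode.comp Computable.snd).to₂
  · intro k a b hb
    obtain ⟨n, hn, -⟩ := Option.bind_eq_some_iff.1 hb
    exact Code.evaln_bound hn
  · intro k l a b hkl hb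
    obtain ⟨n, hn, hnb⟩ := Option.bind_eq_some_iff.1 hb
    exact Option.bind_eq_some_iff.2 ⟨n, Code.evaln_mono hkl hn, hnb⟩
  · intro a b
    have heval (n : ℕ) : n ∈ c.eval (encode a) ↔ ∃ b ∈ f a, encode b = n := by simp [hc]
    simp only [Option.mem_def, Option.bind_eq_some_iff]
    constructor
    · intro hb
      obtain ⟨k, hk⟩ := Code.evaln_complete.1 ((heval _).2 ⟨b, hb, rfl⟩)
      exact ⟨k, encode b, hk, encodek b⟩
    · rintro ⟨k, n, hn, hnb⟩
      obtain ⟨b', hb', rfl⟩ := (heval n).1 (Code.evaln_sound hn)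
      obtain rfl : b' = b := by rwa [encodek, Option.some_inj] at hnb
      exact hb'

theorem computablePred_comp {P : β → Prop} (hP : ComputablePred P) {f : α → β}
    (hf : Computable f) : ComputablePred fun a => P (f a) := by
  classical exact (hP.decide.comp hf).computablePred

theorem rePred_comp {P : β → Prop} (hP : REPred P) {f : α → β} (hf : Computable f) :
    REPred fun a => P (f a) :=
  Partrec.comp hP hf

theorem rePred_and {P Q : α → Prop} (hP : REPred P) (hQ : REPred Q) :
    REPred fun a => P a ∧ Q a :=
  (Partrec.bind hP (Partrec.comp hQ Computable.fst).to₂).of_eq fun a =>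
    Part.ext fun _ => by simp

theorem rePred_exists_partrec_selector {R : α × β → Prop} (hR : REPred R) :
    ∃ C : α →. β, Partrec C ∧ (∀ a, ∀ b ∈ C a, R (a, b)) ∧ ∀ a, (C a).Dom ↔ ∃ b, R (a, b) := by
  obtain ⟨g, hg⟩ := exists_isStageApproximation hR
  have hmem (a b) : R (a, b) ↔ ∃ k, g k (a, b) = some () := by
    simpa using hg.mem_iff (a := (a, b)) (b := ())
  let search (a : α) (m : ℕ) : Option β :=
    (decode m.unpair.2).bind fun b => (g m.unpair.1 (a, b)).map fun _ => b
  have hsearch : Computable₂ search := by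
    have hm : Computable fun p : α × ℕ => p.2.unpair := Computable.unpair.comp Computable.snd
    refine Computable.option_bind (Computable.decode.comp (Computable.snd.comp hm))
      (Computable.option_map (hg.computable.comp (Computable.fst.comp (hm.comp Computable.fst))
        ((Computable.fst.comp Computable.fst).pair Computable.snd)) ?_)
    exact (Computable.snd.comp Computable.fst).to₂
  have hspec {a m b} : b ∈ search a m ↔
      decode m.unpair.2 = some b ∧ g m.unpair.1 (a, b) = some () := by
    simp only [search, Option.mem_def, Option.bind_eq_some_iff, Option.map_eq_some_iff]
    constructor
    · rintro ⟨b, hb, _, hk, rfl⟩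
      exact ⟨hb, hk⟩
    · exact fun ⟨hb, hk⟩ => ⟨b, hb, (), hk, rfl⟩
  refine ⟨fun a => Nat.rfindOpt (search a), Partrec.rfindOpt hsearch, fun a b hb => ?_,
    fun a => Nat.rfindOpt_dom.trans ⟨fun ⟨m, b, hb⟩ => ?_, fun ⟨b, hb⟩ => ?_⟩⟩
  · obtain ⟨m, hm⟩ := Nat.rfindOpt_spec hb
    exact (hmem a b).2 ⟨_, (hspec.1 hm).2⟩
  · exact ⟨b, (hmem a b).2 ⟨_, (hspec.1 hb).2⟩⟩
  · obtain ⟨k, hk⟩ := (hmem a b).1 hb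
    exact ⟨Nat.pair k (encode b), b, hspec.2 (by simpa using hk)⟩

theorem rePred_exists {R : α × β → Prop} (hR : REPred R) : REPred fun a => ∃ b, R (a, b) := by
  obtain ⟨C, hC, -, hdom⟩ := rePred_exists_partrec_selector hR
  exact hC.dom_re.of_eq hdom

theorem computable_of_rePred_graph {f : α → β} (hf : REPred fun p : α × β => f p.1 = p.2) :
    Computable f := by
  obtain ⟨C, hC, hspec, hdom⟩ := rePred_exists_partrec_selector hf
  refine hC.of_eq fun a => Part.eq_some_iff.2 ?_
  have ha : (C a).Dom := (hdom a).2 ⟨f a, rfl⟩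
  simpa only [hspec a _ (Part.get_mem ha)] using Part.get_mem ha

end Recursion

section RationalArithmetic

open Encodable

theorem primrec_int_toNat : Primrec Int.toNat := by
  refine (Primrec.ite (Primrec.eq.comp (Primrec.nat_mod.comp Primrec.encode (Primrec.const 2))
    (Primrec.const 0)) (Primrec.nat_div.comp Primrec.encode (Primrec.const 2))
    (Primrec.const 0)).of_eq fun z => ?_
  cases z with
  | ofNat n =>
    rw [show encode (Int.ofNat n) = 2 * n from rfl]
    simp
  | negSucc n =>
    rw [show encode (Int.negSucc n) = 2 * n + 1 from rfl, if_neg (by lia), Int.toNat_negSucc]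

theorem primrec_int_neg_toNat : Primrec fun z : ℤ => (-z).toNat := by
  refine (Primrec.ite (Primrec.eq.comp (Primrec.nat_mod.comp Primrec.encode (Primrec.const 2))
    (Primrec.const 0)) (Primrec.const 0)
    (Primrec.nat_div.comp (Primrec.succ.comp Primrec.encode) (Primrec.const 2))).of_eq fun z => ?_
  cases z with
  | ofNat n =>
    rw [show encode (Int.ofNat n) = 2 * n from rfl]
    simp
  | negSucc n =>
    rw [show encode (Int.negSucc n) = 2 * n + 1 from rfl, if_neg (by lia), Int.neg_negSucc]
    lia

theorem primrec_int_natAbs : Primrec Int.natAbs :=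
  (Primrec.nat_add.comp primrec_int_toNat primrec_int_neg_toNat).of_eq fun z =>
    Int.toNat_add_toNat_neg_eq_natAbs z

theorem coprime_iff_forall_lt_succ {a b : ℕ} (hb : 0 < b) :
    Nat.Coprime a b ↔ ∀ d < b + 1, ¬(d ≠ 1 ∧ a % d = 0 ∧ b % d = 0) := by
  constructor
  · rintro h d - ⟨hd, hda, hdb⟩
    exact hd (Nat.eq_one_of_dvd_coprimes h (Nat.dvd_of_mod_eq_zero hda)
      (Nat.dvd_of_mod_eq_zero hdb))
  · intro h
    by_contra hab
    exact h (a.gcd b) (Nat.lt_succ_of_le (Nat.gcd_le_right a hb))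
      ⟨hab, Nat.mod_eq_zero_of_dvd (Nat.gcd_dvd_left a b),
        Nat.mod_eq_zero_of_dvd (Nat.gcd_dvd_right a b)⟩

theorem primrecRel_pos_and_coprime : PrimrecRel fun a b : ℕ => 0 < b ∧ Nat.Coprime a b := by
  have hdvd : PrimrecRel fun (d : ℕ) (p : ℕ × ℕ) => ¬(d ≠ 1 ∧ p.1 % d = 0 ∧ p.2 % d = 0) := by
    refine PrimrecPred.not (PrimrecPred.and
      (Primrec.eq.comp Primrec.fst (Primrec.const 1)).not (PrimrecPred.and ?_ ?_))
    · exact Primrec.eq.comp (Primrec.nat_mod.comp (Primrec.fst.comp Primrec.snd) Primrec.fst)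
        (Primrec.const 0)
    · exact Primrec.eq.comp (Primrec.nat_mod.comp (Primrec.snd.comp Primrec.snd) Primrec.fst)
        (Primrec.const 0)
  have hall : PrimrecPred fun p : ℕ × ℕ => ∀ d ∈ List.range (p.2 + 1),
      ¬(d ≠ 1 ∧ p.1 % d = 0 ∧ p.2 % d = 0) :=
    hdvd.forall_mem_list.comp (Primrec.list_range.comp (Primrec.succ.comp Primrec.snd)) Primrec.id
  refine ((Primrec.nat_lt.comp (Primrec.const 0) Primrec.snd).and hall).of_eq fun p => ?_
  simp only [List.mem_range]
  exact and_congr_right fun hp => (coprime_iff_forall_lt_succ hp).symm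

/-- A code for rationals from which numerator and denominator can be read off. Mathlib's
`Encodable.encode q` is instead the rank of this code among all codes of rationals. -/
def ratCode (q : ℚ) : ℕ := Nat.pair (encode q.num) q.den

theorem primrecPred_mem_range_ratCode : PrimrecPred (· ∈ Set.range ratCode) := by
  have hnum : Primrec fun m : ℕ => (Denumerable.ofNat ℤ m.unpair.1).natAbs :=
    primrec_int_natAbs.comp ((Primrec.ofNat ℤ).comp (Primrec.fst.comp Primrec.unpair))
  refine (primrecRel_pos_and_coprime.comp hnum (Primrec.snd.comp Primrec.unpair)).of_eq
    fun m => ⟨fun ⟨hpos, hcop⟩ => ⟨⟨_, _, hpos.ne', hcop⟩, ?_⟩, ?_⟩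
  · rw [ratCode, Denumerable.encode_ofNat, Nat.pair_unpair]
  · rintro ⟨q, rfl⟩
    simp only [ratCode, Nat.unpair_pair, Denumerable.ofNat_encode]
    exact ⟨q.pos, q.reduced⟩

open Classical in
theorem encode_rat_eq_count (q : ℚ) :
    @encode ℚ Primcodable.toEncodable q = Nat.count (· ∈ Set.range ratCode) (ratCode q) := by
  change List.countP _ (List.range (ratCode q)) = List.countP _ _
  congr
  funext m
  congr

theorem computable_ratCode : Computable ratCode := by
  classical
  have hcount : Primrec (Nat.count (· ∈ Set.range ratCode)) :=
    (Primrec.list_length.comp ((Primrec.listFilter primrecPred_mem_range_ratCode).comp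
      Primrec.list_range)).of_eq fun n => by rw [Nat.count, List.countP_eq_length_filter]
  have hgraph : PrimrecPred fun p : ℚ × ℕ => p.2 ∈ Set.range ratCode ∧
      Nat.count (· ∈ Set.range ratCode) p.2 = @encode ℚ Primcodable.toEncodable p.1 :=
    (primrecPred_mem_range_ratCode.comp Primrec.snd).and
      (Primrec.eq.comp (hcount.comp Primrec.snd) (Primrec.encode.comp Primrec.fst))
  refine computable_of_rePred_graph (hgraph.computablePred.to_re.of_eq fun p => ?_)
  obtain ⟨q, m⟩ := p
  dsimp only
  constructor
  · rintro ⟨hm, hcode⟩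
    rw [encode_rat_eq_count] at hcode
    exact (Nat.count_injective hm (Set.mem_range_self q) hcode).symm
  · rintro rfl
    exact ⟨Set.mem_range_self q, (encode_rat_eq_count q).symm⟩

theorem computable_rat_num : Computable Rat.num :=
  ((Computable.ofNat ℤ).comp (Computable.fst.comp
    (Computable.unpair.comp computable_ratCode))).of_eq fun q => by
      rw [ratCode, Nat.unpair_pair, Denumerable.ofNat_encode]

theorem computable_rat_den : Computable Rat.den :=
  (Computable.snd.comp (Computable.unpair.comp computable_ratCode)).of_eq fun q => by
    rw [ratCode, Nat.unpair_pair]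

theorem computablePred_eq {α β : Type*} [Primcodable α] [Primcodable β] {f g : α → β}
    (hf : Computable f) (hg : Computable g) : ComputablePred fun a => f a = g a := by
  classical exact computablePred_comp Primrec.eq.computablePred (hf.pair hg)

theorem computable₂_int_add : Computable₂ fun a b : ℤ => a + b := by
  have pos {f : (ℤ × ℤ) × ℤ → ℤ} (hf : Primrec f) := primrec_int_toNat.comp hf
  have neg {f : (ℤ × ℤ) × ℤ → ℤ} (hf : Primrec f) := primrec_int_neg_toNat.comp hf
  have ha : Primrec fun p : (ℤ × ℤ) × ℤ => p.1.1 := Primrec.fst.comp Primrec.fst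
  have hb : Primrec fun p : (ℤ × ℤ) × ℤ => p.1.2 := Primrec.snd.comp Primrec.fst
  have hc : Primrec fun p : (ℤ × ℤ) × ℤ => p.2 := Primrec.snd
  refine computable_of_rePred_graph ((computablePred_eq
    (Primrec.nat_add.comp (Primrec.nat_add.comp (pos ha) (pos hb)) (neg hc)).to_comp
    (Primrec.nat_add.comp (Primrec.nat_add.comp (neg ha) (neg hb)) (pos hc)).to_comp).to_re.of_eq
    fun p => ?_)
  lia

theorem int_eq_toNat_sub_toNat_neg (z : ℤ) : z = z.toNat - (-z).toNat := by lia

theorem computable₂_int_mul : Computable₂ fun a b : ℤ => a * b := by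
  have pos {f : (ℤ × ℤ) × ℤ → ℤ} (hf : Primrec f) := primrec_int_toNat.comp hf
  have neg {f : (ℤ × ℤ) × ℤ → ℤ} (hf : Primrec f) := primrec_int_neg_toNat.comp hf
  have ha : Primrec fun p : (ℤ × ℤ) × ℤ => p.1.1 := Primrec.fst.comp Primrec.fst
  have hb : Primrec fun p : (ℤ × ℤ) × ℤ => p.1.2 := Primrec.snd.comp Primrec.fst
  have hc : Primrec fun p : (ℤ × ℤ) × ℤ => p.2 := Primrec.snd
  refine computable_of_rePred_graph ((computablePred_eq
    (Primrec.nat_add.comp (Primrec.nat_add.comp (Primrec.nat_mul.comp (pos ha) (pos hb))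
      (Primrec.nat_mul.comp (neg ha) (neg hb))) (neg hc)).to_comp
    (Primrec.nat_add.comp (Primrec.nat_add.comp (Primrec.nat_mul.comp (pos ha) (neg hb))
      (Primrec.nat_mul.comp (neg ha) (pos hb))) (pos hc)).to_comp).to_re.of_eq fun p => ?_)
  obtain ⟨⟨a, b⟩, c⟩ := p
  conv_rhs => rw [int_eq_toNat_sub_toNat_neg a, int_eq_toNat_sub_toNat_neg b,
    int_eq_toNat_sub_toNat_neg c]
  zify
  constructor <;> intro h <;> linarith

theorem computablePred_int_lt : ComputablePred fun p : ℤ × ℤ => p.1 < p.2 := by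
  refine (Primrec.nat_lt.comp
    (Primrec.nat_add.comp (primrec_int_toNat.comp Primrec.fst)
      (primrec_int_neg_toNat.comp Primrec.snd))
    (Primrec.nat_add.comp (primrec_int_toNat.comp Primrec.snd)
      (primrec_int_neg_toNat.comp Primrec.fst))).computablePred.of_eq fun p => ?_
  lia

theorem computable_int_natCast : Computable fun n : ℕ => (n : ℤ) :=
  ((Computable.ofNat ℤ).comp
    (Primrec.nat_mul.to_comp.comp (Computable.const 2) Computable.id)).of_eq fun n =>
      Denumerable.ofNat_of_decode (Encodable.encodek (n : ℤ))

theorem computable₂_rat_add : Computable₂ fun q r : ℚ => q + r := by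
  have num := computable_rat_num
  have den := computable_int_natCast.comp computable_rat_den
  have hq : Computable fun p : (ℚ × ℚ) × ℚ => p.1.1 := Computable.fst.comp Computable.fst
  have hr : Computable fun p : (ℚ × ℚ) × ℚ => p.1.2 := Computable.snd.comp Computable.fst
  have hs : Computable fun p : (ℚ × ℚ) × ℚ => p.2 := Computable.snd
  refine computable_of_rePred_graph ((computablePred_eq
    (computable₂_int_mul.comp (computable₂_int_add.comp
      (computable₂_int_mul.comp (num.comp hq) (den.comp hr))
      (computable₂_int_mul.comp (num.comp hr) (den.comp hq))) (den.comp hs))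
    (computable₂_int_mul.comp (num.comp hs)
      (computable₂_int_mul.comp (den.comp hq) (den.comp hr)))).to_re.of_eq fun p => ?_)
  obtain ⟨⟨q, r⟩, s⟩ := p
  conv_rhs => rw [← q.num_div_den, ← r.num_div_den, ← s.num_div_den]
  have := q.den_ne_zero
  have := r.den_ne_zero
  have := s.den_ne_zero
  qify
  field_simp

theorem computable₂_rat_mul : Computable₂ fun q r : ℚ => q * r := by
  have num := computable_rat_num
  have den := computable_int_natCast.comp computable_rat_den
  have hq : Computable fun p : (ℚ × ℚ) × ℚ => p.1.1 := Computable.fst.comp Computable.fst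
  have hr : Computable fun p : (ℚ × ℚ) × ℚ => p.1.2 := Computable.snd.comp Computable.fst
  have hs : Computable fun p : (ℚ × ℚ) × ℚ => p.2 := Computable.snd
  refine computable_of_rePred_graph ((computablePred_eq
    (computable₂_int_mul.comp (computable₂_int_mul.comp (num.comp hq) (num.comp hr)) (den.comp hs))
    (computable₂_int_mul.comp (num.comp hs)
      (computable₂_int_mul.comp (den.comp hq) (den.comp hr)))).to_re.of_eq fun p => ?_)
  obtain ⟨⟨q, r⟩, s⟩ := p
  conv_rhs => rw [← q.num_div_den, ← r.num_div_den, ← s.num_div_den]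
  have := q.den_ne_zero
  have := r.den_ne_zero
  have := s.den_ne_zero
  qify
  field_simp

theorem computable₂_rat_sub : Computable₂ fun q r : ℚ => q - r :=
  (computable₂_rat_add.comp Computable.fst
    (computable₂_rat_mul.comp (Computable.const (-1)) Computable.snd)).of_eq fun p => by ring

theorem computablePred_rat_lt : ComputablePred fun p : ℚ × ℚ => p.1 < p.2 := by
  have num := computable_rat_num
  have den := computable_int_natCast.comp computable_rat_den
  refine (computablePred_comp computablePred_int_lt ((computable₂_int_mul.comp
    (num.comp Computable.fst) (den.comp Computable.snd)).pair
    (computable₂_int_mul.comp (num.comp Computable.snd) (den.comp Computable.fst)))).of_eq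
    fun p => (Rat.lt_iff _ _).symm

theorem computable_rat_natCast : Computable fun n : ℕ => (n : ℚ) := by
  refine computable_of_rePred_graph ((computablePred_eq
    (computable₂_int_mul.comp (computable_int_natCast.comp Computable.fst)
      (computable_int_natCast.comp (computable_rat_den.comp Computable.snd)))
    (computable_rat_num.comp Computable.snd)).to_re.of_eq fun p => ?_)
  obtain ⟨n, q⟩ := p
  conv_rhs => rw [← q.num_div_den]
  have := q.den_ne_zero
  qify
  field_simp

theorem computable_rat_one_div_pnat : Computable fun n : ℕ+ => (1 : ℚ) / n := by
  have hval : Computable fun n : ℕ+ => (n : ℕ) :=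
    (Primrec.succ.comp Primrec.encode).to_comp.of_eq PNat.natPred_add_one
  refine computable_of_rePred_graph ((computablePred_eq
    (computable₂_rat_mul.comp Computable.snd
      (computable_rat_natCast.comp (hval.comp Computable.fst)))
    (Computable.const 1)).to_re.of_eq fun p => ?_)
  obtain ⟨n, q⟩ := p
  rw [div_eq_iff (by simp), eq_comm]

theorem computable₂_rat_pow : Computable₂ fun (q : ℚ) (n : ℕ) => q ^ n := by
  have hstep : Computable₂ fun (p : ℚ × ℕ) (y : ℕ × ℚ) => y.2 * p.1 :=
    computable₂_rat_mul.comp (Computable.snd.comp Computable.snd)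
      (Computable.fst.comp Computable.fst)
  refine (Computable.nat_rec Computable.snd (Computable.const (1 : ℚ)) hstep).of_eq fun p => ?_
  induction p.2 with
  | zero => exact (pow_zero _).symm
  | succ n ih => exact (congrArg (· * p.1) ih).trans (pow_succ p.1 n).symm

end RationalArithmetic

section SemicomputableReals

open Topology

/-- Lower semicomputability (left computable enumerability) of a real number, expressed through
its left cut. -/
def LowerSemicomputable (y : ℝ) : Prop := REPred fun q : ℚ => (q : ℝ) < y

/-- Upper semicomputability (right computable enumerability) of a real number, expressed through
its right cut. -/
def UpperSemicomputable (y : ℝ) : Prop := REPred fun q : ℚ => y < (q : ℝ)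

theorem rePred_rat_lt {α : Type*} [Primcodable α] {f g : α → ℚ} (hf : Computable f)
    (hg : Computable g) : REPred fun a => f a < g a :=
  rePred_comp computablePred_rat_lt.to_re (hf.pair hg)

theorem rePred_rat_le {α : Type*} [Primcodable α] {f g : α → ℚ} (hf : Computable f)
    (hg : Computable g) : REPred fun a => f a ≤ g a :=
  (computablePred_comp computablePred_rat_lt.not (hg.pair hf)).to_re.of_eq fun _ => not_lt

theorem exists_pnat_one_div_lt {ε : ℝ} (hε : 0 < ε) : ∃ n : ℕ+, 1 / (n : ℝ) < ε := by
  obtain ⟨n, hn⟩ := exists_nat_one_div_lt hε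
  exact ⟨n.succPNat, by simpa using hn⟩

theorem ComputableReal.lowerSemicomputable {y : ℝ} (hy : ComputableReal y) :
    LowerSemicomputable y := by
  obtain ⟨f, hf, hfy⟩ := hy
  have hre : REPred fun p : ℚ × ℕ+ => p.1 + 1 / p.2 < f p.2 :=
    rePred_rat_lt (computable₂_rat_add.comp Computable.fst
      (computable_rat_one_div_pnat.comp Computable.snd)) (hf.comp Computable.snd)
  refine (rePred_exists hre).of_eq fun q =>
    ⟨fun ⟨n, (hn : q + 1 / (n : ℚ) < f n)⟩ => ?_, fun hq => ?_⟩
  · have hn := (Rat.cast_lt (K := ℝ)).2 hn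
    push_cast at hn
    linarith [(abs_lt.1 (hfy n)).1]
  · obtain ⟨n, hn⟩ := exists_pnat_one_div_lt (half_pos (sub_pos.2 hq))
    have : (q : ℝ) + 1 / n < f n := by linarith [(abs_lt.1 (hfy n)).2]
    exact ⟨n, (Rat.cast_lt (K := ℝ)).1 (by push_cast; exact this)⟩

theorem ComputableReal.upperSemicomputable {y : ℝ} (hy : ComputableReal y) :
    UpperSemicomputable y := by
  obtain ⟨f, hf, hfy⟩ := hy
  have hre : REPred fun p : ℚ × ℕ+ => f p.2 + 1 / p.2 < p.1 :=
    rePred_rat_lt (computable₂_rat_add.comp (hf.comp Computable.snd)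
      (computable_rat_one_div_pnat.comp Computable.snd)) Computable.fst
  refine (rePred_exists hre).of_eq fun q =>
    ⟨fun ⟨n, (hn : f n + 1 / (n : ℚ) < q)⟩ => ?_, fun hq => ?_⟩
  · have hn := (Rat.cast_lt (K := ℝ)).2 hn
    push_cast at hn
    linarith [(abs_lt.1 (hfy n)).2]
  · obtain ⟨n, hn⟩ := exists_pnat_one_div_lt (half_pos (sub_pos.2 hq))
    have : (f n : ℝ) + 1 / n < q := by linarith [(abs_lt.1 (hfy n)).1]
    exact ⟨n, (Rat.cast_lt (K := ℝ)).1 (by push_cast; exact this)⟩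

theorem div_lt_ratCast_iff {a b : ℝ} (ha : 0 ≤ a) (hb : 0 < b) (q : ℚ) :
    a / b < q ↔ ∃ u v : ℚ, 0 < v ∧ u < q * v ∧ a < u ∧ v < b := by
  constructor
  · intro hq
    have hq0 : (0 : ℝ) < q := (div_nonneg ha hb.le).trans_lt hq
    obtain ⟨v, hav, hvb⟩ := exists_rat_btwn ((div_lt_comm₀ hb hq0).1 hq)
    obtain ⟨u, hau, huv⟩ := exists_rat_btwn ((div_lt_iff₀' hq0).1 hav)
    exact ⟨u, v, mod_cast (div_nonneg ha hq0.le).trans_lt hav, mod_cast huv, hau, hvb⟩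
  · rintro ⟨u, v, hv, huv, hau, hvb⟩
    have hv : (0 : ℝ) < v := mod_cast hv
    have hqv : a < q * v := hau.trans (mod_cast huv)
    have hq0 : (0 : ℝ) < q := pos_of_mul_pos_left (ha.trans_lt hqv) hv.le
    exact (div_lt_iff₀ hb).2 (hqv.trans (mul_lt_mul_of_pos_left hvb hq0))

theorem UpperSemicomputable.div {a b : ℝ} (ha : UpperSemicomputable a) (ha0 : 0 ≤ a)
    (hb : LowerSemicomputable b) (hb0 : 0 < b) : UpperSemicomputable (a / b) := by
  have hq : Computable fun p : (ℚ × ℚ) × ℚ => p.1.1 := Computable.fst.comp Computable.fst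
  have hu : Computable fun p : (ℚ × ℚ) × ℚ => p.1.2 := Computable.snd.comp Computable.fst
  have hv : Computable fun p : (ℚ × ℚ) × ℚ => p.2 := Computable.snd
  refine (rePred_exists (rePred_exists (rePred_and (rePred_rat_lt (Computable.const 0) hv)
    (rePred_and (rePred_rat_lt hu (computable₂_rat_mul.comp hq hv))
      (rePred_and (rePred_comp ha hu) (rePred_comp hb hv)))))).of_eq fun q => ?_
  exact (div_lt_ratCast_iff ha0 hb0 q).symm

theorem lt_rpow_iff_exists_rat {ρ : ℝ} (hρ : 0 ≤ ρ) {s r : ℝ} (hs : 0 ≤ s) (hr0 : 0 < r)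
    (hr1 : r ≤ 1) : s < r ^ ρ ↔ ∃ q : ℚ, ρ < q ∧ s ^ q.den < r ^ q.num.toNat := by
  have hpow {q : ℚ} (hq : ρ < q) : s ^ q.den < r ^ q.num.toNat ↔ s < r ^ (q : ℝ) := by
    have hq0 : (0 : ℚ) ≤ q := mod_cast hρ.trans hq.le
    have hnum : ((q.num.toNat : ℕ) : ℝ) = q * q.den := by
      rw [← Int.cast_natCast, Int.toNat_of_nonneg (Rat.num_nonneg.2 hq0)]
      exact mod_cast (Rat.mul_den_eq_num q).symm
    rw [← Real.rpow_natCast r, hnum, Real.rpow_mul hr0.le, Real.rpow_natCast,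
      pow_lt_pow_iff_left₀ hs (by positivity) q.den_ne_zero]
  constructor
  · intro hsr
    have hnear : ∀ᶠ y in 𝓝 ρ, s < r ^ y :=
      (Real.continuousAt_const_rpow hr0.ne').eventually_const_lt hsr
    obtain ⟨u, hu, hsub⟩ := mem_nhdsGE_iff_exists_Ico_subset.1 (mem_nhdsWithin_of_mem_nhds hnear)
    obtain ⟨q, hρq, hqu⟩ := exists_rat_btwn (Set.mem_Ioi.1 hu)
    exact ⟨q, hρq, (hpow hρq).2 (hsub ⟨hρq.le, hqu⟩)⟩
  · rintro ⟨q, hq, hsq⟩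
    exact ((hpow hq).1 hsq).trans_le (Real.rpow_le_rpow_of_exponent_ge hr0 hr1 hq.le)

theorem UpperSemicomputable.rePred_lt_rpow {ρ : ℝ} (h : UpperSemicomputable ρ) (hρ : 0 ≤ ρ) :
    REPred fun p : ℚ × ℚ => (0 ≤ p.1 ∧ 0 < p.2 ∧ p.2 ≤ 1) ∧ (p.1 : ℝ) < (p.2 : ℝ) ^ ρ := by
  have hs : Computable fun p : (ℚ × ℚ) × ℚ => p.1.1 := Computable.fst.comp Computable.fst
  have hr : Computable fun p : (ℚ × ℚ) × ℚ => p.1.2 := Computable.snd.comp Computable.fst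
  have hq : Computable fun p : (ℚ × ℚ) × ℚ => p.2 := Computable.snd
  have hre := rePred_exists (rePred_and (rePred_comp h hq) (rePred_rat_lt
    (computable₂_rat_pow.comp hs (computable_rat_den.comp hq))
    (computable₂_rat_pow.comp hr
      (primrec_int_toNat.to_comp.comp (computable_rat_num.comp hq)))))
  refine (rePred_and (rePred_and (rePred_rat_le (Computable.const 0) Computable.fst)
    (rePred_and (rePred_rat_lt (Computable.const 0) Computable.snd)
      (rePred_rat_le Computable.snd (Computable.const 1)))) hre).of_eq fun p =>
    and_congr_right fun ⟨hs, hr0, hr1⟩ => ?_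
  rw [lt_rpow_iff_exists_rat hρ (mod_cast hs) (mod_cast hr0) (mod_cast hr1)]
  exact_mod_cast Iff.rfl

end SemicomputableReals

section PowerSums

open Topology

variable {ι : Type*} {len : ι → ℕ}

theorem summable_pow_of_le {c t : ℝ} (hc : Summable fun p => c ^ len p) (ht0 : 0 ≤ t)
    (htc : t ≤ c) : Summable fun p => t ^ len p :=
  hc.of_nonneg_of_le (fun _ => pow_nonneg ht0 _) fun _ => pow_le_pow_left₀ ht0 htc _

theorem pow_le_of_tsum_pow_le_sum_add {t ε : ℝ} (ht0 : 0 ≤ t) (ht : Summable fun p => t ^ len p)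
    {F : Finset ι} (hF : ∑' p, t ^ len p ≤ ∑ p ∈ F, t ^ len p + ε) {p : ι} (hp : p ∉ F) :
    t ^ len p ≤ ε := by
  classical
  have hins := ht.sum_le_tsum (insert p F) fun _ _ => pow_nonneg ht0 _
  rw [Finset.sum_insert hp] at hins
  linarith

theorem tsum_pow_le_sum_add_pow_of_le {c t : ℝ} (hc0 : 0 < c) (hc1 : c < 1)
    (hc : Summable fun p => c ^ len p) (ht0 : 0 ≤ t) (htc : t ≤ c) {F : Finset ι} {n : ℕ}
    (hF : ∑' p, c ^ len p ≤ ∑ p ∈ F, c ^ len p + c ^ n) :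
    ∑' p, t ^ len p ≤ ∑ p ∈ F, t ^ len p + t ^ n := by
  have ht := summable_pow_of_le hc ht0 htc
  have hn (p : ι) (hp : p ∉ F) : n ≤ len p :=
    (pow_le_pow_iff_right_of_lt_one₀ hc0 hc1).1 (pow_le_of_tsum_pow_le_sum_add hc0.le hc hF hp)
  have htail : ∑' p : {p // p ∉ F}, c ^ len p ≤ c ^ n := by
    linarith [hc.sum_add_tsum_subtype_compl F]
  have hterm (p : {p // p ∉ F}) : t ^ len p ≤ (t / c) ^ n * c ^ len p := by
    calc t ^ len p = (t / c) ^ len p * c ^ len p := by rw [← mul_pow, div_mul_cancel₀ t hc0.ne']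
      _ ≤ (t / c) ^ n * c ^ len p := by
        have : t / c ≤ 1 := (div_le_one hc0).2 htc
        gcongr ?_ * _
        exact pow_le_pow_of_le_one (by positivity) this (hn p p.2)
  have hcF : Summable fun p : {p // p ∉ F} => c ^ len p := hc.subtype {p | p ∉ F}
  rw [← ht.sum_add_tsum_subtype_compl F]
  gcongr
  calc ∑' p : {p // p ∉ F}, t ^ len p ≤ ∑' p : {p // p ∉ F}, (t / c) ^ n * c ^ len p :=
        (ht.subtype {p | p ∉ F}).tsum_le_tsum hterm (hcF.mul_left _)
    _ = (t / c) ^ n * ∑' p : {p // p ∉ F}, c ^ len p := tsum_mul_left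
    _ ≤ (t / c) ^ n * c ^ n := by gcongr
    _ = t ^ n := by rw [← mul_pow, div_mul_cancel₀ t hc0.ne']

theorem le_add_div_of_sum_pow_le {x r ε : ℝ} (hx : 0 < x) (hε : 0 ≤ ε) {F : Finset ι} {p₀ : ι}
    (hp₀ : p₀ ∈ F) (hlen : 1 ≤ len p₀) (h : ∑ p ∈ F, r ^ len p ≤ ∑ p ∈ F, x ^ len p + ε) :
    r ≤ x + ε / x ^ (len p₀ - 1) := by
  rcases le_total r x with hrx | hxr
  · exact hrx.trans (le_add_of_nonneg_right (by positivity))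
  have hterm : r ^ len p₀ - x ^ len p₀ ≤ ε := by
    have hle : r ^ len p₀ - x ^ len p₀ ≤ ∑ p ∈ F, (r ^ len p - x ^ len p) :=
      Finset.single_le_sum (f := fun p => r ^ len p - x ^ len p)
        (fun p _ => sub_nonneg.2 (pow_le_pow_left₀ hx.le hxr _)) hp₀
    rw [Finset.sum_sub_distrib] at hle
    linarith
  have hfac : (r - x) * x ^ (len p₀ - 1) ≤ r ^ len p₀ - x ^ len p₀ := by
    obtain ⟨l, hl⟩ := Nat.exists_eq_add_of_le' hlen
    have hpow : x ^ l ≤ r ^ l := pow_le_pow_left₀ hx.le hxr l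
    rw [hl, Nat.add_sub_cancel, pow_succ', pow_succ', sub_mul]
    gcongr
    exact hx.le.trans hxr
  have := (le_div_iff₀ (by positivity)).2 (hfac.trans hterm)
  linarith

theorem add_rpow_le_rpow_mul {x ε ρ : ℝ} (hx : 0 < x) (hε : 0 ≤ ε) (hρ : ρ ≤ 1) :
    (x + ε) ^ ρ ≤ x ^ ρ * (1 + ε / x) := by
  have hone : 1 ≤ 1 + ε / x := le_add_of_nonneg_right (by positivity)
  calc (x + ε) ^ ρ = (x * (1 + ε / x)) ^ ρ := by congr 1; field_simp
    _ = x ^ ρ * (1 + ε / x) ^ ρ := Real.mul_rpow hx.le (by positivity)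
    _ ≤ x ^ ρ * (1 + ε / x) := by
      gcongr
      simpa using Real.rpow_le_rpow_of_exponent_le hone hρ

theorem add_pow_le_pow_add_div_mul_pow {e ε c : ℝ} (he : 0 ≤ e) (hε : 0 ≤ ε) (hec : e < c)
    (hc : e + ε ≤ c) (l : ℕ) : (e + ε) ^ l ≤ e ^ l + ε / (c - e) * c ^ l := by
  have hd : 0 < c - e := sub_pos.2 hec
  have hθ0 : 0 ≤ ε / (c - e) := by positivity
  have hθ1 : ε / (c - e) ≤ 1 := (div_le_one hd).2 (by linarith)
  have hconv := (convexOn_pow l).2 (Set.mem_Ici.2 he) (Set.mem_Ici.2 (he.trans hec.le))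
    (sub_nonneg.2 hθ1) hθ0 (sub_add_cancel _ _)
  have hcomb : (1 - ε / (c - e)) * e + ε / (c - e) * c = e + ε := by field_simp; ring
  simp only [smul_eq_mul, hcomb] at hconv
  have : 0 ≤ ε / (c - e) * e ^ l := by positivity
  linarith

theorem pow_le_of_tsum_pow_le_sum_pow {c e s ε : ℝ} (hc : Summable fun p => c ^ len p)
    (he : 0 ≤ e) (hec : e < c) (hs : 0 ≤ s) (hε : 0 ≤ ε) (hse : s ≤ e + ε) (hεc : e + ε ≤ c)
    {F : Finset ι} (h : ∑' p, e ^ len p ≤ ∑ p ∈ F, s ^ len p) {p : ι} (hp : p ∉ F) :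
    e ^ len p ≤ ε / (c - e) * ∑' p, c ^ len p := by
  have : 0 ≤ c - e := sub_nonneg.2 hec.le
  refine pow_le_of_tsum_pow_le_sum_add he (summable_pow_of_le hc he hec.le) (h.trans ?_) hp
  calc ∑ p ∈ F, s ^ len p ≤ ∑ p ∈ F, (e ^ len p + ε / (c - e) * c ^ len p) :=
        Finset.sum_le_sum fun p _ => (pow_le_pow_left₀ hs hse _).trans
          (add_pow_le_pow_add_div_mul_pow he hε hec hεc _)
    _ = ∑ p ∈ F, e ^ len p + ε / (c - e) * ∑ p ∈ F, c ^ len p := by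
      rw [Finset.sum_add_distrib, Finset.mul_sum]
    _ ≤ ∑ p ∈ F, e ^ len p + ε / (c - e) * ∑' p, c ^ len p := by
      gcongr
      exact hc.sum_le_tsum F fun _ _ => pow_nonneg (he.trans hec.le) _

theorem continuousOn_tsum_pow {c : ℝ} (hc : Summable fun p => c ^ len p) :
    ContinuousOn (fun t : ℝ => ∑' p, t ^ len p) (Set.Icc 0 c) :=
  continuousOn_tsum (fun p => (continuous_pow (len p)).continuousOn) hc fun p t ht => by
    rw [Real.norm_of_nonneg (pow_nonneg ht.1 _)]
    exact pow_le_pow_left₀ ht.1 ht.2 _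

theorem tsum_pow_lt_tsum_pow {c s t : ℝ} (hc : Summable fun p => c ^ len p) (hs : 0 ≤ s)
    (hst : s < t) (htc : t ≤ c) {p₀ : ι} (hp₀ : 1 ≤ len p₀) :
    ∑' p, s ^ len p < ∑' p, t ^ len p :=
  Summable.tsum_lt_tsum (fun _ => pow_le_pow_left₀ hs hst.le _)
    (pow_lt_pow_left₀ hst hs (Nat.one_le_iff_ne_zero.1 hp₀))
    (summable_pow_of_le hc hs (hst.le.trans htc)) (summable_pow_of_le hc (hs.trans hst.le) htc)

/-- A finite witness that the programs outside `F` are long. With `Z t = ∑' p, t ^ len p`, the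
set `F` exhausts `Z c` up to `w`, the number `r` is (almost) an upper bound for `x` read off from
`Z x` with error `δ`, and comparing with `s < r ^ ρ` shows that `F` almost exhausts `Z (x ^ ρ)`. -/
structure IsCertificate (len : ι → ℕ) (c x ρ w δ : ℝ) (F : Finset ι) (r s : ℝ) : Prop where
  pos : 0 < r
  le_one : r ≤ 1
  nonneg : 0 ≤ s
  lt_rpow : s < r ^ ρ
  lt_sum : w < ∑ p ∈ F, c ^ len p
  sum_lt : ∑ p ∈ F, r ^ len p < ∑' p, x ^ len p + δ
  tsum_lt : ∑' p, (x ^ ρ) ^ len p < ∑ p ∈ F, s ^ len p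

variable {c x ρ : ℝ}

theorem IsCertificate.pow_len_le (hc0 : 0 < c) (hc1 : c < 1) (hc : Summable fun p => c ^ len p)
    (hx : 0 < x) (hxρ : x < x ^ ρ) (hρc : x ^ ρ < c) (hρ0 : 0 ≤ ρ) (hρ1 : ρ ≤ 1) {p₀ : ι}
    (hp₀ : 1 ≤ len p₀) {w δ r s : ℝ} {F : Finset ι} (h : IsCertificate len c x ρ w δ F r s)
    {n : ℕ} (hw : ∑' p, c ^ len p ≤ w + c ^ n) (hn : x ^ n ≤ δ) (hδ : δ < x ^ len p₀)
    (hδc : x ^ ρ + x ^ ρ * (2 * δ / x ^ len p₀) ≤ c) {p : ι} (hp : p ∉ F) :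
    (x ^ ρ) ^ len p ≤ x ^ ρ * (2 * δ / x ^ len p₀) / (c - x ^ ρ) * ∑' p, c ^ len p := by
  have hδ0 : 0 ≤ δ := (pow_pos hx n).le.trans hn
  have hF : ∑' p, c ^ len p ≤ ∑ p ∈ F, c ^ len p + c ^ n := by linarith [h.lt_sum]
  have hFx := tsum_pow_le_sum_add_pow_of_le hc0 hc1 hc hx.le (hxρ.trans hρc).le hF
  have hp₀F : p₀ ∈ F := by
    by_contra hp₀F
    have := pow_le_of_tsum_pow_le_sum_add hx.le (summable_pow_of_le hc hx.le (hxρ.trans hρc).le)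
      hFx hp₀F
    linarith
  have hr : r ≤ x + 2 * δ / x ^ (len p₀ - 1) :=
    le_add_div_of_sum_pow_le hx (by positivity) hp₀F hp₀ (by linarith [h.sum_lt])
  have hs : s ≤ x ^ ρ + x ^ ρ * (2 * δ / x ^ len p₀) :=
    calc s ≤ r ^ ρ := h.lt_rpow.le
      _ ≤ (x + 2 * δ / x ^ (len p₀ - 1)) ^ ρ := Real.rpow_le_rpow h.pos.le hr hρ0
      _ ≤ x ^ ρ * (1 + 2 * δ / x ^ (len p₀ - 1) / x) :=
        add_rpow_le_rpow_mul hx (by positivity) hρ1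
      _ = x ^ ρ + x ^ ρ * (2 * δ / x ^ len p₀) := by
        rw [div_div, pow_sub_one_mul (Nat.one_le_iff_ne_zero.1 hp₀), mul_one_add]
  exact pow_le_of_tsum_pow_le_sum_pow hc (hx.trans hxρ).le hρc h.nonneg (by positivity) hs hδc
    h.tsum_lt.le hp

theorem eventually_forall_isCertificate_lt_len (hc0 : 0 < c) (hc1 : c < 1)
    (hc : Summable fun p => c ^ len p) (hx : 0 < x) (hxρ : x < x ^ ρ) (hρc : x ^ ρ < c)
    (hρ0 : 0 ≤ ρ) (hρ1 : ρ ≤ 1) {p₀ : ι} (hp₀ : 1 ≤ len p₀) {M : ℕ} {η : ℝ} (hη : x ^ M ≤ η)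
    (hηM : η < (x ^ ρ) ^ (M + 1)) (d : ℕ) :
    ∀ᶠ j in atTop, ∀ (w r s : ℝ) (F : Finset ι), IsCertificate len c x ρ w (η ^ j) F r s →
      ∑' p, c ^ len p ≤ w + c ^ (M * j) → ∀ p ∉ F, (M + 1) * j + d < len p := by
  have he : 0 < x ^ ρ := hx.trans hxρ
  have he1 : x ^ ρ < 1 := hρc.trans hc1
  have hη0 : 0 < η := (pow_pos hx M).trans_le hη
  have hη1 : η < 1 := hηM.trans (pow_lt_one₀ he.le he1 M.succ_ne_zero)
  have hlim : Tendsto (fun j => η ^ j) atTop (𝓝 0) :=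
    tendsto_pow_atTop_nhds_zero_of_lt_one hη0.le hη1
  have hclose : ∀ᶠ j in atTop, x ^ ρ + x ^ ρ * (2 * η ^ j / x ^ len p₀) < c := by
    have : Tendsto (fun j => x ^ ρ + x ^ ρ * (2 * η ^ j / x ^ len p₀)) atTop
        (𝓝 (x ^ ρ + x ^ ρ * (2 * 0 / x ^ len p₀))) :=
      (((hlim.const_mul 2).div_const _).const_mul _).const_add _
    exact this.eventually_lt_const (by simpa using hρc)
  set C := x ^ ρ * (2 / x ^ len p₀) / (c - x ^ ρ) * ∑' p, c ^ len p with hC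
  have hlong : ∀ᶠ j in atTop, C * (η / (x ^ ρ) ^ (M + 1)) ^ j < (x ^ ρ) ^ d := by
    have : Tendsto (fun j => C * (η / (x ^ ρ) ^ (M + 1)) ^ j) atTop (𝓝 (C * 0)) :=
      (tendsto_pow_atTop_nhds_zero_of_lt_one (by positivity)
        ((div_lt_one (by positivity)).2 hηM)).const_mul C
    exact this.eventually_lt_const (by simpa using pow_pos he d)
  filter_upwards [hlim.eventually_lt_const (pow_pos hx (len p₀)), hclose, hlong]
    with j hj hjc hjd w r s F h hw p hp
  refine (pow_lt_pow_iff_right_of_lt_one₀ he he1).1 ?_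
  calc (x ^ ρ) ^ len p
      ≤ x ^ ρ * (2 * η ^ j / x ^ len p₀) / (c - x ^ ρ) * ∑' p, c ^ len p :=
        h.pow_len_le hc0 hc1 hc hx hxρ hρc hρ0 hρ1 hp₀ hw
          (by rw [pow_mul]; gcongr) hj hjc.le hp
    _ = C * (η / (x ^ ρ) ^ (M + 1)) ^ j * (x ^ ρ) ^ ((M + 1) * j) := by
      rw [pow_mul, mul_assoc, ← mul_pow, div_mul_cancel₀ _ (by positivity), hC]
      ring
    _ < (x ^ ρ) ^ d * (x ^ ρ) ^ ((M + 1) * j) := by gcongr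
    _ = (x ^ ρ) ^ ((M + 1) * j + d) := by rw [← pow_add, add_comm]

theorem eventually_exists_isCertificate (hc1 : c < 1)
    (hc : Summable fun p => c ^ len p) (hx : 0 < x) (hxρ : x < x ^ ρ) (hρc : x ^ ρ < c)
    (hρ0 : 0 < ρ) {p₀ : ι} (hp₀ : 1 ≤ len p₀) {w δ : ℝ} (hw : w < ∑' p, c ^ len p) (hδ : 0 < δ) :
    ∀ᶠ F in atTop, ∃ r s : ℚ, IsCertificate len c x ρ w δ F r s := by
  have hxc : x < c := hxρ.trans hρc
  obtain ⟨r, hxr, hrc, hr⟩ : ∃ r : ℚ, x < r ∧ (r : ℝ) < c ∧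
      ∑' p, (r : ℝ) ^ len p < ∑' p, x ^ len p + δ := by
    have hcont : ∀ᶠ t in 𝓝 x, ∑' p, t ^ len p < ∑' p, x ^ len p + δ :=
      ((continuousOn_tsum_pow hc).continuousAt (Icc_mem_nhds hx hxc)).eventually_lt_const
        (lt_add_of_pos_right _ hδ)
    obtain ⟨u, hu, hsub⟩ := mem_nhdsGE_iff_exists_Ico_subset.1 (mem_nhdsWithin_of_mem_nhds hcont)
    obtain ⟨r, hxr, hru⟩ := exists_rat_btwn (lt_min (Set.mem_Ioi.1 hu) hxc)
    exact ⟨r, hxr, hru.trans_le (min_le_right _ _),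
      hsub ⟨hxr.le, hru.trans_le (min_le_left _ _)⟩⟩
  obtain ⟨s, hes, hsr⟩ := exists_rat_btwn (lt_min (Real.rpow_lt_rpow hx.le hxr hρ0) hρc)
  have hs0 : (0 : ℝ) ≤ s := (hx.trans (hxρ.trans hes)).le
  have hsc : (s : ℝ) ≤ c := hsr.le.trans (min_le_right _ _)
  filter_upwards [hc.hasSum.eventually_const_lt hw,
    (summable_pow_of_le hc hs0 hsc).hasSum.eventually_const_lt
      (tsum_pow_lt_tsum_pow hc (hx.trans hxρ).le hes hsc hp₀)] with F hFw hFs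
  have hr0 : (0 : ℝ) < r := hx.trans hxr
  exact ⟨r, s, hr0, hrc.le.trans hc1.le, hs0, hsr.trans_le (min_le_left _ _), hFw,
    ((summable_pow_of_le hc hr0.le hrc.le).sum_le_tsum F
      fun _ _ => pow_nonneg hr0.le _).trans_lt hr, hFs⟩

theorem exists_pow_lt_pow_succ {x e : ℝ} (hx : 0 ≤ x) (hxe : x < e) :
    ∃ M : ℕ, x ^ M < e ^ (M + 1) := by
  have he : 0 < e := hx.trans_lt hxe
  obtain ⟨M, hM⟩ := exists_pow_lt_of_lt_one he ((div_lt_one he).2 hxe)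
  rw [div_pow, div_lt_iff₀ (by positivity)] at hM
  exact ⟨M, hM.trans_eq (pow_succ' e M).symm⟩

end PowerSums

section PrefixFreeMachines

theorem uniquelyDecodable_of_prefix_imp_eq {α : Type*} {S : Set (List α)}
    (hS : ∀ p ∈ S, ∀ q ∈ S, p <+: q → p = q) (hnil : [] ∉ S) :
    InformationTheory.UniquelyDecodable S := by
  intro L₁
  induction L₁ with
  | nil =>
    intro L₂ _ h₂ heq
    refine (List.eq_nil_iff_forall_not_mem.2 fun q hq => hnil ?_).symm
    exact List.flatten_eq_nil_iff.1 heq.symm q hq ▸ h₂ q hq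
  | cons p L ih =>
    rintro (_ | ⟨q, L'⟩) h₁ h₂ heq
    · exact absurd (List.flatten_eq_nil_iff.1 heq p List.mem_cons_self ▸
        h₁ p List.mem_cons_self) hnil
    simp only [List.forall_mem_cons] at h₁ h₂
    simp only [List.flatten_cons] at heq
    obtain rfl : p = q := by
      have hp : p <+: q ++ L'.flatten := heq ▸ List.prefix_append p L.flatten
      rcases List.prefix_or_prefix_of_prefix hp (List.prefix_append q _) with hpq | hqp
      · exact hS p h₁.1 q h₂.1 hpq
      · exact (hS q h₂.1 p h₁.1 hqp).symm
    rw [ih L' h₁.2 h₂.2 (List.append_cancel_left heq)]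

theorem sum_one_div_card_pow_length_le_one {α : Type*} [Fintype α] [Nonempty α]
    {S : Finset (List α)} (hS : ∀ p ∈ S, ∀ q ∈ S, p <+: q → p = q) :
    ∑ p ∈ S, (1 / Fintype.card α : ℝ) ^ p.length ≤ 1 := by
  by_cases hnil : [] ∈ S
  · have : S = {[]} :=
      Finset.eq_singleton_iff_unique_mem.2 ⟨hnil, fun q hq => (hS [] hnil q hq q.nil_prefix).symm⟩
    simp [this]
  · exact InformationTheory.kraft_mcmillan_inequality
      (uniquelyDecodable_of_prefix_imp_eq (S := (S : Set (List α))) hS hnil)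

variable {U : List Bool →. List Bool}

theorem PrefixFree.sum_half_pow_length_le_one (hU : PrefixFree U)
    (F : Finset {p // (U p).Dom}) : ∑ p ∈ F, (1 / 2 : ℝ) ^ p.1.length ≤ 1 := by
  have hF := sum_one_div_card_pow_length_le_one (S := F.map (Function.Embedding.subtype _)) <| by
    simp only [Finset.mem_map, Function.Embedding.subtype_apply]
    rintro _ ⟨p, -, rfl⟩ _ ⟨q, -, rfl⟩ hpq
    exact hU p q p.2 q.2 hpq
  simpa only [Finset.sum_map, Function.Embedding.subtype_apply, Fintype.card_bool,
    Nat.cast_ofNat] using hF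

theorem PrefixFree.summable_half_pow_length (hU : PrefixFree U) :
    Summable fun p : {p // (U p).Dom} => (1 / 2 : ℝ) ^ p.1.length :=
  summable_of_sum_le (fun _ => by positivity) hU.sum_half_pow_length_le_one

theorem PrefixFree.tsum_half_pow_length_le_one (hU : PrefixFree U) :
    ∑' p : {p // (U p).Dom}, (1 / 2 : ℝ) ^ p.1.length ≤ 1 :=
  hU.summable_half_pow_length.tsum_le_of_sum_le hU.sum_half_pow_length_le_one

theorem Zfun_eq_tsum_pow (U : List Bool →. List Bool) (t : ℝ) :
    Zfun U t = ∑' p : {p // (U p).Dom}, ((2 : ℝ) ^ (-1 / t)) ^ p.1.length := by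
  refine tsum_congr fun p => ?_
  rw [← Real.rpow_natCast, ← Real.rpow_mul two_pos.le, div_mul_eq_mul_div, neg_one_mul]

/-- The string `1^j 0 β` of length `(M + 1) * j + 1`, where `β` lists the `M * j` lowest binary
digits of `w`: a self-delimiting description of `j` and of `w < 2 ^ (M * j)`. -/
def digitCode (M j w : ℕ) : List Bool :=
  List.replicate j true ++ false :: (List.range (M * j)).map w.testBit

theorem length_digitCode (M j w : ℕ) : (digitCode M j w).length = (M + 1) * j + 1 := by
  simp only [digitCode, List.length_append, List.length_replicate, List.length_cons,
    List.length_map, List.length_range]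
  ring

theorem idxOf_false_digitCode (M j w : ℕ) : (digitCode M j w).idxOf false = j := by
  rw [digitCode, List.idxOf_append_of_notMem (by simp)]
  simp

theorem computable_digitCode (M : ℕ) : Computable fun a : ℕ × ℕ => digitCode M a.1 a.2 := by
  have hbit : Primrec₂ Nat.testBit := by
    have hpow : Primrec fun a : ℕ × ℕ => 2 ^ a.2 :=
      (Primrec₂.unpaired'.1 Nat.Primrec.pow).comp (Primrec.const 2) Primrec.snd
    refine (Primrec.eq.decide.comp (Primrec.nat_mod.comp (Primrec.nat_div.comp Primrec.fst hpow)
      (Primrec.const 2)) (Primrec.const 1)).of_eq fun a => ?_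
    exact Nat.testBit_eq_decide_div_mod_eq.symm
  have hones : Primrec fun a : ℕ × ℕ => List.replicate a.1 true :=
    (Primrec.list_map (Primrec.list_range.comp Primrec.fst) (Primrec.const true).to₂).of_eq
      fun a => by simp
  have hbits : Primrec fun a : ℕ × ℕ => (List.range (M * a.1)).map a.2.testBit :=
    Primrec.list_map (Primrec.list_range.comp (Primrec.nat_mul.comp (Primrec.const M) Primrec.fst))
      (hbit.comp (Primrec.snd.comp Primrec.fst) Primrec.snd).to₂
  exact (Primrec.list_append.comp hones
    (Primrec.list_cons.comp (Primrec.const false) hbits)).to_comp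

theorem eq_of_digitCode_prefix {M j j' w w' : ℕ} (hw : w < 2 ^ (M * j)) (hw' : w' < 2 ^ (M * j'))
    (h : digitCode M j w <+: digitCode M j' w') : j = j' ∧ w = w' := by
  obtain rfl : j = j' := by
    obtain ⟨l, hl⟩ := h
    have hmem : false ∈ digitCode M j w := by simp [digitCode]
    rw [← idxOf_false_digitCode M j w, ← List.idxOf_append_of_mem (l₂ := l) hmem, hl,
      idxOf_false_digitCode]
  refine ⟨rfl, Nat.eq_of_testBit_eq fun i => ?_⟩
  rcases lt_or_ge i (M * j) with hi | hi
  · have heq := h.eq_of_length (by simp only [length_digitCode])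
    simp only [digitCode, List.append_cancel_left_eq, List.cons.injEq, true_and,
      List.map_inj_left, List.mem_range] at heq
    exact heq i hi
  · have hpow := Nat.pow_le_pow_right two_pos hi
    rw [Nat.testBit_lt_two_pow (hw.trans_le hpow), Nat.testBit_lt_two_pow (hw'.trans_le hpow)]

theorem OptimalMachine.exists_length_le_add (hU : OptimalMachine U) {α β : Type*} [Primcodable α]
    [Primcodable β] {R : α × β → Prop} (hR : REPred R) {code : α → List Bool}
    (hcode : Computable code) (hprefix : ∀ a b a' b', R (a, b) → R (a', b') →
      code a <+: code a' → a = a') {out : β → List Bool} (hout : Computable out) :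
    ∃ d, ∀ a b, R (a, b) →
      ∃ b', R (a, b') ∧ ∃ p, out b' ∈ U p ∧ p.length ≤ (code a).length + d := by
  have hin : Computable fun x : List Bool × (α × β) => code x.2.1 :=
    hcode.comp (Computable.fst.comp Computable.snd)
  obtain ⟨C, hC, hspec, hdom⟩ := rePred_exists_partrec_selector
    (rePred_and (computablePred_eq hin Computable.fst).to_re (rePred_comp hR Computable.snd))
  have hCout : Partrec fun q => (C q).map fun x => out x.2 :=
    hC.map (hout.comp (Computable.snd.comp Computable.snd)).to₂
  have hfree : PrefixFree fun q => (C q).map fun x => out x.2 := by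
    intro q q' hq hq' hqq'
    obtain ⟨⟨a, b⟩, (rfl : code a = q), hab⟩ := (hdom q).1 hq
    obtain ⟨⟨a', b'⟩, (rfl : code a' = q'), hab'⟩ := (hdom q').1 hq'
    rw [hprefix a b a' b' hab hab' hqq']
  obtain ⟨d, hd⟩ := hU.2.2 _ hCout hfree
  refine ⟨d, fun a b hab => ?_⟩
  have hx := Part.get_mem ((hdom (code a)).2 ⟨(a, b), rfl, hab⟩)
  obtain ⟨hxcode, hxR⟩ := hspec _ _ hx
  obtain ⟨p, hp, hlen⟩ := hd _ _ (Part.mem_map _ hx)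
  set x := (C (code a)).get _
  have hxa : x.1 = a := hprefix _ x.2 a b hxR hab (hxcode ▸ List.prefix_refl _)
  exact ⟨x.2, hxa ▸ hxR, p, hp, hlen⟩

theorem OptimalMachine.exists_one_le_length (hU : OptimalMachine U) :
    ∃ p : {p // (U p).Dom}, 1 ≤ p.1.length := by
  obtain ⟨d, hd⟩ := hU.exists_length_le_add (R := fun x : Bool × Bool => x.2 = x.1)
    (computablePred_eq Computable.snd Computable.fst).to_re (code := fun a => [a])
    (Primrec.list_cons.comp Primrec.id (Primrec.const [])).to_comp (by simp)
    (Primrec.list_cons.comp Primrec.id (Primrec.const [])).to_comp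
  obtain ⟨b, (rfl : b = true), p, hp, -⟩ := hd true true rfl
  obtain ⟨b, (rfl : b = false), q, hq, -⟩ := hd false false rfl
  have hpq : p ≠ q := by
    rintro rfl
    simpa using Part.mem_unique hp hq
  by_cases hnil : p = []
  · exact ⟨⟨q, Part.dom_iff_mem.2 ⟨_, hq⟩⟩, List.length_pos_iff.2 fun h => hpq (hnil.trans h.symm)⟩
  · exact ⟨⟨p, Part.dom_iff_mem.2 ⟨_, hp⟩⟩, List.length_pos_iff.2 hnil⟩

end PrefixFreeMachines

section Stages

open Encodable

theorem computable_sum_range {A γ : Type*} [AddCommMonoid A] [Primcodable A] [Primcodable γ]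
    (hadd : Computable₂ fun x y : A => x + y) {f : γ → ℕ → A} (hf : Computable₂ f) {n : γ → ℕ}
    (hn : Computable n) : Computable fun c => ∑ i ∈ Finset.range (n c), f c i := by
  have hstep : Computable₂ fun (c : γ) (y : ℕ × A) => y.2 + f c y.1 :=
    hadd.comp (Computable.snd.comp Computable.snd)
      (hf.comp Computable.fst (Computable.fst.comp Computable.snd))
  refine (Computable.nat_rec hn (Computable.const (0 : A)) hstep).of_eq fun c => ?_
  induction n c with
  | zero => exact Finset.sum_range_zero _ |>.symm
  | succ n ih => rw [Finset.sum_range_succ, ← ih]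

namespace IsStageApproximation

variable {α σ : Type*} [Primcodable α] [Primcodable σ] {f : α →. σ} {g : ℕ → α → Option σ}

theorem finite_setOf_mem (h : IsStageApproximation f g) (k : ℕ) :
    {a : {a // (f a).Dom} | (f a).get a.2 ∈ g k a}.Finite := by
  refine Set.Finite.of_finite_image (f := fun a => encode a.1) ?_
    (encode_injective.comp Subtype.val_injective).injOn
  exact (Set.finite_lt_nat k).subset (Set.image_subset_iff.2 fun _ ha => h.encode_lt ha)

/-- The inputs on which `f` is seen to halt at stage `k`. -/
noncomputable def stage (h : IsStageApproximation f g) (k : ℕ) : Finset {a // (f a).Dom} :=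
  (h.finite_setOf_mem k).toFinset

theorem mem_stage (h : IsStageApproximation f g) {k : ℕ} {a : {a // (f a).Dom}} :
    a ∈ h.stage k ↔ (f a).get a.2 ∈ g k a :=
  (h.finite_setOf_mem k).mem_toFinset

theorem tendsto_stage_atTop (h : IsStageApproximation f g) : Tendsto h.stage atTop atTop :=
  tendsto_atTop_finset_of_monotone
    (fun _ _ hkl _ ha => h.mem_stage.2 (h.mono hkl (h.mem_stage.1 ha)))
    fun a => (h.mem_iff.1 (Part.get_mem a.2)).imp fun _ => h.mem_stage.2

theorem sum_stage {A : Type*} [AddCommMonoid A] (h : IsStageApproximation f g) (v : α → σ → A)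
    (k : ℕ) : ∑ a ∈ h.stage k, v a ((f a).get a.2) = ∑ n ∈ Finset.range k,
      ((decode₂ α n).bind fun a => (g k a).map (v a)).getD 0 := by
  refine Finset.sum_of_injOn (fun a => encode a.1)
    (encode_injective.comp Subtype.val_injective).injOn
    (fun a ha => Finset.mem_coe.2 (Finset.mem_range.2 (h.encode_lt (h.mem_stage.1 ha))))
    (fun n _ hn => ?_) fun a ha => ?_
  · suffices ((decode₂ α n).bind fun a => (g k a).map (v a)) = none by rw [this, Option.getD_none]
    simp only [Option.bind_eq_none_iff, Option.map_eq_none_iff]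
    intro a ha
    refine Option.eq_none_iff_forall_not_mem.2 fun b hb => hn ?_
    have hfa : b ∈ f a := h.mem_iff.2 ⟨k, hb⟩
    refine ⟨⟨a, Part.dom_iff_mem.2 ⟨b, hfa⟩⟩, h.mem_stage.2 ?_, mem_decode₂.1 ha⟩
    rwa [Part.get_eq_of_mem hfa]
  · rw [encodek₂, Option.bind_some, h.mem_stage.1 ha, Option.map_some, Option.getD_some]

theorem computable_sum_stage (h : IsStageApproximation f g) {A γ : Type*} [AddCommMonoid A]
    [Primcodable A] [Primcodable γ] (hadd : Computable₂ fun x y : A => x + y) {v : γ → α → σ → A}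
    (hv : Computable fun x : γ × α × σ => v x.1 x.2.1 x.2.2) {k : γ → ℕ} (hk : Computable k) :
    Computable fun c => ∑ a ∈ h.stage (k c), v c a ((f a).get a.2) := by
  simp only [h.sum_stage]
  have hg : Computable fun x : (γ × ℕ) × α => g (k x.1.1) x.2 :=
    h.computable.comp (hk.comp (Computable.fst.comp Computable.fst)) Computable.snd
  have hterm : Computable₂ fun (x : (γ × ℕ) × α) (b : σ) => v x.1.1 x.2 b :=
    (hv.comp ((Computable.fst.comp (Computable.fst.comp Computable.fst)).pair
      ((Computable.snd.comp Computable.fst).pair Computable.snd))).to₂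
  have hbind : Computable fun x : γ × ℕ =>
      (decode₂ α x.2).bind fun a => (g (k x.1) a).map (v x.1 a) :=
    Computable.option_bind (Primrec.decode₂.to_comp.comp Computable.snd)
      (Computable.option_map hg hterm).to₂
  exact computable_sum_range hadd (Computable.option_getD hbind (Computable.const 0)).to₂ hk

theorem exists_computable_forall_stage_ne {f : α →. List Bool} {g : ℕ → α → Option (List Bool)}
    (h : IsStageApproximation f g) :
    ∃ fresh : ℕ → List Bool, Computable fresh ∧ ∀ k, ∀ a ∈ h.stage k, fresh k ∉ f a := by
  -- A string longer than all the outputs of a stage taken together is not among them.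
  have hlen : Computable fun k => ∑ a ∈ h.stage k, (((f a).get a.2).length + 1) :=
    h.computable_sum_stage Primrec.nat_add.to_comp
      (v := fun (_ : ℕ) _ s => s.length + 1)
      (Primrec.succ.to_comp.comp (Computable.list_length.comp (Computable.snd.comp Computable.snd)))
      Computable.id
  refine ⟨fun k => (List.range (∑ a ∈ h.stage k, (((f a).get a.2).length + 1))).map fun _ => true,
    (Primrec.list_map Primrec.list_range (Primrec.const true).to₂).to_comp.comp hlen,
    fun k a ha hmem => ?_⟩
  have hle := Finset.single_le_sum (f := fun a : {a // (f a).Dom} => ((f a).get a.2).length + 1)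
    (fun _ _ => Nat.zero_le _) ha
  have hout := congrArg List.length (Part.get_eq_of_mem hmem a.2)
  rw [List.length_map, List.length_range] at hout
  lia

theorem rePred_exists_isCertificate (h : IsStageApproximation f g) {len : α → ℕ}
    (hlen : Computable len) {x ρ : ℝ}
    (hx : LowerSemicomputable (∑' a : {a // (f a).Dom}, x ^ len a))
    (hρ : UpperSemicomputable ρ) (hρ0 : 0 ≤ ρ)
    (hxρ : UpperSemicomputable (∑' a : {a // (f a).Dom}, (x ^ ρ) ^ len a))
    (c : ℚ) {γ : Type*} [Primcodable γ] {w δ : γ → ℚ} (hw : Computable w) (hδ : Computable δ)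
    {k : γ → ℕ} (hk : Computable k) :
    REPred fun y => ∃ r s : ℚ, IsCertificate (fun a : {a // (f a).Dom} => len a) c x ρ (w y) (δ y)
      (h.stage (k y)) r s := by
  have hy : Computable fun y : (γ × ℚ) × ℚ => y.1.1 := Computable.fst.comp Computable.fst
  have hr : Computable fun y : (γ × ℚ) × ℚ => y.1.2 := Computable.snd.comp Computable.fst
  have hs : Computable fun y : (γ × ℚ) × ℚ => y.2 := Computable.snd
  have hsum {t : (γ × ℚ) × ℚ → ℚ} (ht : Computable t) :
      Computable fun y => ∑ a ∈ h.stage (k y.1.1), t y ^ len a :=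
    h.computable_sum_stage computable₂_rat_add (v := fun y a _ => t y ^ len a)
      (computable₂_rat_pow.comp (ht.comp Computable.fst)
        (hlen.comp (Computable.fst.comp Computable.snd))) (hk.comp hy)
  refine (rePred_exists (rePred_exists (rePred_and
    (rePred_comp (hρ.rePred_lt_rpow hρ0) (hs.pair hr)) (rePred_and
      (rePred_rat_lt (hw.comp hy) (hsum (Computable.const c)))
      (rePred_and (rePred_comp hx (computable₂_rat_sub.comp (hsum hr) (hδ.comp hy)))
        (rePred_comp hxρ (hsum hs))))))).of_eq fun y => exists₂_congr fun r s => ?_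
  constructor
  · rintro ⟨⟨⟨hs0, hr0, hr1⟩, hsr⟩, hw, hx, hxρ⟩
    push_cast at hx hxρ
    exact ⟨mod_cast hr0, mod_cast hr1, mod_cast hs0, hsr, mod_cast hw,
      sub_lt_iff_lt_add.1 hx, hxρ⟩
  · intro hc
    refine ⟨⟨⟨mod_cast hc.nonneg, mod_cast hc.pos, mod_cast hc.le_one⟩, hc.lt_rpow⟩,
      mod_cast hc.lt_sum, ?_, ?_⟩
    · push_cast
      exact sub_lt_iff_lt_add.2 hc.sum_lt
    · push_cast
      exact hc.tsum_lt

end IsStageApproximation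

theorem OptimalMachine.exists_notMem_stage {U : List Bool →. List Bool} (hU : OptimalMachine U)
    {g : ℕ → List Bool → Option (List Bool)} (h : IsStageApproximation U g) (M : ℕ)
    {Q : (ℕ × ℕ) × ℕ → Prop} (hQ : REPred Q) :
    ∃ d, ∀ j w k, w < 2 ^ (M * j) → Q ((j, w), k) →
      ∃ k, Q ((j, w), k) ∧ ∃ p ∉ h.stage k, p.1.length ≤ (M + 1) * j + 1 + d := by
  obtain ⟨fresh, hfresh, hnotMem⟩ := h.exists_computable_forall_stage_ne
  have hpow : Primrec fun a : (ℕ × ℕ) × ℕ => 2 ^ (M * a.1.1) :=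
    (Primrec₂.unpaired'.1 Nat.Primrec.pow).comp (Primrec.const 2)
      (Primrec.nat_mul.comp (Primrec.const M) (Primrec.fst.comp Primrec.fst))
  have hbound : PrimrecPred fun a : (ℕ × ℕ) × ℕ => a.1.2 < 2 ^ (M * a.1.1) :=
    Primrec.nat_lt.comp (Primrec.snd.comp Primrec.fst) hpow
  obtain ⟨d, hd⟩ := hU.exists_length_le_add (rePred_and hbound.computablePred.to_re hQ)
    (computable_digitCode M)
    (fun _ _ _ _ hab hab' hcode => Prod.ext_iff.2 (eq_of_digitCode_prefix hab.1 hab'.1 hcode))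
    hfresh
  refine ⟨d, fun j w k hw hk => ?_⟩
  obtain ⟨l, ⟨-, hl⟩, p, hp, hlen⟩ := hd (j, w) k ⟨hw, hk⟩
  rw [length_digitCode] at hlen
  exact ⟨l, hl, ⟨p, Part.dom_iff_mem.2 ⟨_, hp⟩⟩, fun hpl => hnotMem l _ hpl hp, hlen⟩

end Stages

theorem exists_nat_mul_half_pow_lt {W : ℝ} (hW0 : 0 < W) (hW1 : W ≤ 1) (n : ℕ) :
    ∃ w : ℕ, w < 2 ^ n ∧ (w * (1 / 2) ^ n : ℝ) < W ∧ W ≤ w * (1 / 2) ^ n + (1 / 2) ^ n := by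
  have hpos : 0 < W * 2 ^ n := by positivity
  obtain ⟨w, hw⟩ := Nat.exists_eq_succ_of_ne_zero (Nat.ceil_pos.2 hpos).ne'
  obtain ⟨hlt, hle⟩ := (Nat.ceil_eq_iff w.succ_ne_zero).1 hw
  have hcancel : (2 : ℝ) ^ n * (1 / 2) ^ n = 1 := by rw [← mul_pow]; norm_num
  have : (0 : ℝ) < (1 / 2) ^ n := by positivity
  simp only [Nat.succ_sub_one] at hlt
  refine ⟨w, ?_, ?_, ?_⟩
  · exact_mod_cast hlt.trans_le (mul_le_of_le_one_left (by positivity) hW1)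
  · calc (w * (1 / 2) ^ n : ℝ) < W * 2 ^ n * (1 / 2) ^ n := by gcongr
      _ = W := by rw [mul_assoc, hcancel, mul_one]
  · calc W = W * 2 ^ n * (1 / 2) ^ n := by rw [mul_assoc, hcancel, mul_one]
      _ ≤ w.succ * (1 / 2) ^ n := by gcongr
      _ = w * (1 / 2) ^ n + (1 / 2) ^ n := by rw [Nat.cast_succ, add_one_mul]

theorem OptimalMachine.not_upperSemicomputable_tsum_rpow {U : List Bool →. List Bool}
    (hU : OptimalMachine U) {x ρ : ℝ} (hx : 0 < x) (hρ : UpperSemicomputable ρ) (hρ0 : 0 < ρ)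
    (hρ1 : ρ < 1) (hxρ : x ^ ρ < 1 / 2)
    (h : LowerSemicomputable (∑' p : {p // (U p).Dom}, x ^ p.1.length)) :
    ¬ UpperSemicomputable (∑' p : {p // (U p).Dom}, (x ^ ρ) ^ p.1.length) := by
  intro h'
  have hx1 : x < 1 := by
    by_contra! hx1
    linarith [Real.one_le_rpow hx1 hρ0.le]
  have hlt : x < x ^ ρ := Real.self_lt_rpow_of_lt_one hx hx1 hρ1
  obtain ⟨g, hg⟩ := exists_isStageApproximation hU.1
  obtain ⟨p₀, hp₀⟩ := hU.exists_one_le_length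
  have hsum := hU.2.1.summable_half_pow_length
  obtain ⟨M, hM⟩ := exists_pow_lt_pow_succ hx.le hlt
  obtain ⟨η, hxη, hηM⟩ := exists_rat_btwn hM
  obtain ⟨d, hd⟩ := hU.exists_notMem_stage hg M <| hg.rePred_exists_isCertificate
    Computable.list_length h hρ hρ0.le h' (1 / 2)
    (w := fun y : (ℕ × ℕ) × ℕ => y.1.2 * (1 / 2) ^ (M * y.1.1)) (δ := fun y => η ^ y.1.1)
    (computable₂_rat_mul.comp
      (computable_rat_natCast.comp (Computable.snd.comp Computable.fst))
      (computable₂_rat_pow.comp (Computable.const _) (Primrec.nat_mul.to_comp.comp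
        (Computable.const M) (Computable.fst.comp Computable.fst))))
    (computable₂_rat_pow.comp (Computable.const η) (Computable.fst.comp Computable.fst))
    Computable.snd
  push_cast at hd
  obtain ⟨j, hj⟩ := (eventually_forall_isCertificate_lt_len one_half_pos one_half_lt_one hsum
    hx hlt hxρ hρ0.le hρ1.le hp₀ hxη.le hηM (1 + d)).exists
  have hW : 0 < ∑' p : {p // (U p).Dom}, (1 / 2 : ℝ) ^ p.1.length :=
    hsum.tsum_pos (fun _ => by positivity) p₀ (by positivity)
  obtain ⟨w, hw, hlow, hupp⟩ := exists_nat_mul_half_pow_lt hW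
    hU.2.1.tsum_half_pow_length_le_one (M * j)
  obtain ⟨k, hk⟩ := (hg.tendsto_stage_atTop.eventually (eventually_exists_isCertificate
    one_half_lt_one hsum hx hlt hxρ hρ0 hp₀ hlow (pow_pos ((pow_pos hx M).trans hxη) j))).exists
  obtain ⟨l, ⟨r, s, hcert⟩, p, hp, hlen⟩ := hd j w k hw hk
  have := hj _ r s _ hcert hupp p hp
  lia

theorem scaled_fixed_point_sets_disjoint_general {U : List Bool →. List Bool}
    (hU : OptimalMachine U) {a b : ℝ} (ha : 0 < a) (hab : a < b)
    (h : UpperSemicomputable (a / b)) :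
    Disjoint {T : ℝ | 0 < T ∧ LowerSemicomputable (Zfun U (a * T))}
      {T : ℝ | b * T < 1 ∧ UpperSemicomputable (Zfun U (b * T))} := by
  refine Set.disjoint_left.2 fun T ⟨hT, haT⟩ ⟨hbT1, hbT⟩ => ?_
  have hb : 0 < b := ha.trans hab
  have hexp : -1 / (a * T) * (a / b) = -1 / (b * T) := by field_simp
  rw [Zfun_eq_tsum_pow] at haT hbT
  rw [← hexp, Real.rpow_mul two_pos.le] at hbT
  refine hU.not_upperSemicomputable_tsum_rpow (by positivity) h (by positivity)
    ((div_lt_one hb).2 hab) ?_ haT hbT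
  rw [← Real.rpow_mul two_pos.le, hexp, one_div, ← Real.rpow_neg_one]
  refine Real.rpow_lt_rpow_of_exponent_lt one_lt_two ?_
  rw [div_lt_iff₀ (by positivity)]
  linarith

theorem scaled_fixed_point_sets_disjoint (U : List Bool →. List Bool)
    (hU : OptimalMachine U) (a b : ℝ)
    (ha : ComputableReal a) (hb : ComputableReal b)
    (ha0 : 0 < a) (ha1 : a ≤ 1) (hb0 : 0 < b) (hb1 : b ≤ 1) (hab : a ≠ b) :
    Disjoint {T : ℝ | T ∈ Set.Ioo (0 : ℝ) 1 ∧ ComputableReal (Zfun U (a * T))}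
             {T : ℝ | T ∈ Set.Ioo (0 : ℝ) 1 ∧ ComputableReal (Zfun U (b * T))} := by
  wlog hlt : a < b generalizing a b
  · exact (this b a hb ha hb0 hb1 ha0 ha1 hab.symm (hab.lt_or_gt.resolve_left hlt)).symm
  have hdiv := ha.upperSemicomputable.div ha0.le hb.lowerSemicomputable hb0
  refine (scaled_fixed_point_sets_disjoint_general hU ha0 hlt hdiv).mono ?_ ?_
  · rintro T ⟨hT, hZ⟩
    exact ⟨hT.1, hZ.lowerSemicomputable⟩
  · rintro T ⟨hT, hZ⟩
    exact ⟨mul_lt_one_of_nonneg_of_lt_one_right hb1 hT.1.le hT.2, hZ.upperSemicomputable⟩
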